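/- arXiv:0907.2594 — 2 statements merged into one kernel-verified Lean document; each statement's English description precedes it below -/
import Mathlib

section
/- For every integer n ≥ 1 there exists a smooth compactly supported function η : ℝⁿ → ℝ such that ∫_{ℝⁿ} ( ‖∇η(x)‖² − (1/2) η(x)² ) · exp(−‖x‖²/4) dx < 0. In fact, one may take η ≡ 1 on the ball of radius R about the origin, η ≡ 0 outside the ball of radius R+1, and 0 ≤ η ≤ 1 with |∇η| ≤ 2 in between, for any sufficiently large R. -/
open MeasureTheory Filter

theorem exists_cutoff : ∃ φ : ℝ → ℝ, ContDiff ℝ (⊤ : ℕ∞) φ ∧ (∀ t, t ≤ 0 → φ t = 1) ∧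
    (∀ t, 1 ≤ t → φ t = 0) ∧ (∀ t, 0 ≤ φ t ∧ φ t ≤ 1) ∧ LipschitzWith 2 φ := by
  let f : ContDiffBump (1/2 : ℝ) := ⟨1/4, 1/2, by norm_num, by norm_num⟩
  let g : ℝ → ℝ := f.normed volume
  have hgs : ContDiff ℝ (⊤ : ℕ∞) g := f.contDiff_normed
  have hgc : Continuous g := hgs.continuous
  have hg0 : ∀ x, 0 ≤ g x := fun x => f.nonneg_normed x
  have hg2 : ∀ x, g x ≤ 2 := by
    intro x
    have h := f.normed_le_div_measure_closedBall_rIn volume x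
    have h2 : (volume : Measure ℝ).real (Metric.closedBall (1/2 : ℝ) f.rIn) = 1/2 := by
      rw [Measure.real, Real.volume_closedBall, ENNReal.toReal_ofReal]
      · change 2 * (1/4 : ℝ) = 1/2
        norm_num
      · change 0 ≤ 2 * (1/4 : ℝ)
        norm_num
    rw [h2] at h
    exact h.trans (by norm_num)
  have hsupp : Function.support g = Set.Ioo (0:ℝ) 1 := by
    have := f.support_normed_eq (μ := volume)
    rw [Real.ball_eq_Ioo] at this
    rw [show g = f.normed volume from rfl, this]
    change Set.Ioo ((1/2 : ℝ) - 1/2) (1/2 + 1/2) = _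
    norm_num
  have hz : ∀ x, x ∉ Set.Ioo (0:ℝ) 1 → g x = 0 := by
    intro x hx
    rw [← hsupp] at hx
    exact Function.notMem_support.1 hx
  let φ : ℝ → ℝ := fun t => 1 - ∫ s in (0:ℝ)..t, g s
  have hd : ∀ t, HasDerivAt φ (- g t) t := fun t =>
    (hgc.integral_hasStrictDerivAt 0 t).hasDerivAt.const_sub 1
  have hder : deriv φ = fun t => - g t := funext fun t => (hd t).deriv
  have hdiff : Differentiable ℝ φ := fun t => (hd t).differentiableAt
  have hanti : Antitone φ := antitone_of_deriv_nonpos hdiff (by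
    intro x; rw [hder]; simpa using hg0 x)
  have h0 : ∀ t, t ≤ 0 → φ t = 1 := by
    intro t ht
    have : ∫ s in (0:ℝ)..t, g s = 0 := by
      apply intervalIntegral.integral_zero_ae
      refine Eventually.of_forall fun x hx => hz x ?_
      rw [Set.uIoc_of_ge ht] at hx
      exact fun h => absurd h.1 (not_lt.2 hx.2)
    simp [φ, this]
  have h1 : ∀ t, 1 ≤ t → φ t = 0 := by
    intro t ht
    have : ∫ s in (0:ℝ)..t, g s = ∫ s, g s := by
      apply intervalIntegral.integral_eq_integral_of_support_subset
      rw [hsupp]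
      exact fun x hx => ⟨hx.1, hx.2.le.trans ht⟩
    have h' : ∫ s, g s = 1 := f.integral_normed
    simp [φ, this, h']
  refine ⟨φ, ?_, h0, h1, ?_, ?_⟩
  · refine contDiff_infty_iff_deriv.2 ⟨hdiff, ?_⟩
    rw [hder]
    exact hgs.neg
  · intro t
    constructor
    · rw [← h1 (max t 1) (le_max_right _ _)]
      exact hanti (le_max_left _ _)
    · rw [← h0 (min t 0) (min_le_right _ _)]
      exact hanti (min_le_left _ _)
  · apply lipschitzWith_of_nnnorm_deriv_le hdiff
    intro x
    rw [hder, ← NNReal.coe_le_coe]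
    simp only [nnnorm_neg, coe_nnnorm, Real.norm_eq_abs, abs_of_nonneg (hg0 x)]
    exact_mod_cast hg2 x

theorem norm_gradient_eq {n : ℕ} (η : EuclideanSpace ℝ (Fin n) → ℝ) (x) :
    ‖gradient η x‖ = ‖fderiv ℝ η x‖ := by
  simp [gradient]

theorem eventually_cutoff (n : ℕ) : ∀ᶠ R : ℝ in atTop, ∃ η : EuclideanSpace ℝ (Fin n) → ℝ,
      ContDiff ℝ (⊤ : ℕ∞) η ∧ HasCompactSupport η ∧
      (∀ x, ‖x‖ ≤ R → η x = 1) ∧ (∀ x, R + 1 ≤ ‖x‖ → η x = 0) ∧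
      (∀ x, 0 ≤ η x ∧ η x ≤ 1) ∧ (∀ x, ‖gradient η x‖ ≤ 2) ∧
      ∫ x, (‖gradient η x‖ ^ 2 - (1 / 2) * η x ^ 2) * Real.exp (-‖x‖ ^ 2 / 4) < 0 := by
  obtain ⟨φ, hφ, hφ0, hφ1, hφb, hφL⟩ := exists_cutoff
  let g : EuclideanSpace ℝ (Fin n) → ℝ := fun x => Real.exp (-‖x‖ ^ 2 / 4)
  have hgpos : ∀ x, 0 < g x := fun x => Real.exp_pos _
  have hI : 0 < ∫ x, g x := by
    have h := GaussianFourier.integral_rexp_neg_mul_sq_norm (V := EuclideanSpace ℝ (Fin n))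
      (b := 1/4) (by norm_num)
    have e : g = fun x => Real.exp (-(1/4) * ‖x‖ ^ 2) := by
      funext x; simp only [g]; congr 1; ring
    rw [e, h]
    positivity
  have hgi : Integrable g := by
    by_contra h
    rw [integral_undef h] at hI
    exact lt_irrefl _ hI
  have hlim := (aecover_ball (μ := (volume : Measure (EuclideanSpace ℝ (Fin n)))) (x := 0)
    (tendsto_id (α := ℝ) (x := atTop))).integral_tendsto_of_countably_generated hgi
  have hev := hlim.eventually (lt_mem_nhds (show (8/9) * ∫ x, g x < ∫ x, g x by linarith))
  filter_upwards [hev, eventually_ge_atTop 1] with R hR hR1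
  simp only [id] at hR
  let η : EuclideanSpace ℝ (Fin n) → ℝ := fun x => φ (‖x‖ - R)
  have hone : ∀ x, ‖x‖ ≤ R → η x = 1 := fun x hx => hφ0 _ (by linarith)
  have hev1 : ∀ x ∈ Metric.ball (0 : EuclideanSpace ℝ (Fin n)) R, η =ᶠ[nhds x] fun _ => 1 := by
    intro x hx
    filter_upwards [Metric.isOpen_ball.mem_nhds hx] with y hy
    exact hone y (by simpa using (mem_ball_zero_iff.1 hy).le)
  have hzero : ∀ x, R + 1 ≤ ‖x‖ → η x = 0 := fun x hx => hφ1 _ (by linarith)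
  have hsm : ContDiff ℝ (⊤ : ℕ∞) η := by
    rw [contDiff_iff_contDiffAt]
    intro x
    by_cases hx : x = 0
    · exact contDiffAt_const.congr_of_eventuallyEq (hev1 x (by simp [hx]; linarith))
    · exact hφ.contDiffAt.comp x ((contDiffAt_norm ℝ hx).sub contDiffAt_const)
  have hcs : HasCompactSupport η :=
    HasCompactSupport.intro (isCompact_closedBall 0 (R+1)) (fun x hx => hzero x (by
      rw [mem_closedBall_zero_iff, not_le] at hx; exact hx.le))
  have hL : LipschitzWith 2 η := by
    have h := hφL.comp (g := fun x : EuclideanSpace ℝ (Fin n) => ‖x‖ - R) (Kg := 1) (by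
      refine LipschitzWith.of_dist_le_mul fun x y => ?_
      simpa [Real.dist_eq, dist_eq_norm] using abs_norm_sub_norm_le x y)
    rw [mul_one] at h
    exact h
  have hgrad : ∀ x, ‖gradient η x‖ ≤ 2 := by
    intro x
    rw [norm_gradient_eq]
    exact_mod_cast norm_fderiv_le_of_lipschitz ℝ hL
  refine ⟨η, hsm, hcs, hone, hzero, fun x => hφb _, hgrad, ?_⟩
  have hb := fun x : EuclideanSpace ℝ (Fin n) => hφb (‖x‖ - R)
  have hcont : Continuous (fun x => (‖gradient η x‖ ^ 2 - (1 / 2) * η x ^ 2) * g x) := by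
    have h1 : Continuous (fderiv ℝ η) := hsm.continuous_fderiv (by simp)
    have h2 := hsm.continuous
    simp only [norm_gradient_eq, g]
    fun_prop
  have hint : Integrable (fun x => (‖gradient η x‖ ^ 2 - (1 / 2) * η x ^ 2) * g x) := by
    refine (hgi.const_mul 5).mono' hcont.aestronglyMeasurable (Eventually.of_forall fun x => ?_)
    rw [norm_mul, Real.norm_eq_abs, Real.norm_eq_abs, abs_of_pos (hgpos x)]
    refine mul_le_mul_of_nonneg_right ?_ (hgpos x).le
    have h1 := hgrad x
    have h2 := norm_nonneg (gradient η x)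
    have h3 : 0 ≤ η x := (hb x).1
    have h4 : η x ≤ 1 := (hb x).2
    rw [abs_le]
    constructor <;> nlinarith
  let B := Metric.ball (0 : EuclideanSpace ℝ (Fin n)) R
  have hBm : MeasurableSet B := Metric.isOpen_ball.measurableSet
  have hub : Integrable (fun x => 4 * g x - 9/2 * B.indicator g x) :=
    (hgi.const_mul 4).sub ((hgi.indicator hBm).const_mul _)
  have hle : ∫ x, (‖gradient η x‖ ^ 2 - (1 / 2) * η x ^ 2) * g x ≤
      ∫ x, (4 * g x - 9/2 * B.indicator g x) := by
    refine integral_mono hint hub fun x => ?_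
    by_cases hx : x ∈ B
    · have h1 : ‖gradient η x‖ = 0 := by
        rw [norm_gradient_eq, (hev1 x hx).fderiv_eq]
        simp
      have h2 : η x = 1 := (hev1 x hx).eq_of_nhds
      simp only [h1, h2, Set.indicator_of_mem hx]
      linarith [hgpos x]
    · simp only [Set.indicator_of_notMem hx]
      have h1 := hgrad x
      have h2 := norm_nonneg (gradient η x)
      have h3 := hgpos x
      have h4 : ‖gradient η x‖ ^ 2 - (1 / 2) * η x ^ 2 ≤ 4 := by nlinarith [sq_nonneg (η x)]
      nlinarith
  rw [integral_sub (hgi.const_mul 4) ((hgi.indicator hBm).const_mul _), integral_const_mul,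
    integral_const_mul, integral_indicator hBm] at hle
  change ∫ x, (‖gradient η x‖ ^ 2 - (1 / 2) * η x ^ 2) * g x < 0
  have hR' : 8/9 * ∫ x, g x < ∫ x in B, g x := hR
  linarith

/-- The flat hyperplane is not `L`-stable: there is a smooth compactly supported `η : ℝⁿ → ℝ`
with `∫ (‖∇η‖² − (1/2)η²) exp(−‖x‖²/4) < 0`. In fact, for any sufficiently large `R` one may
take `η ≡ 1` on the ball of radius `R`, `η ≡ 0` outside the ball of radius `R + 1`, with
`0 ≤ η ≤ 1` and `‖∇η‖ ≤ 2`. -/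
theorem hyperplane_not_L_stable (n : ℕ) (hn : 1 ≤ n) :
    (∃ η : EuclideanSpace ℝ (Fin n) → ℝ, ContDiff ℝ (⊤ : ℕ∞) η ∧ HasCompactSupport η ∧
      ∫ x, (‖gradient η x‖ ^ 2 - (1 / 2) * η x ^ 2) * Real.exp (-‖x‖ ^ 2 / 4) < 0) ∧
    (∀ᶠ R : ℝ in atTop, ∃ η : EuclideanSpace ℝ (Fin n) → ℝ,
      ContDiff ℝ (⊤ : ℕ∞) η ∧ HasCompactSupport η ∧
      (∀ x, ‖x‖ ≤ R → η x = 1) ∧ (∀ x, R + 1 ≤ ‖x‖ → η x = 0) ∧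
      (∀ x, 0 ≤ η x ∧ η x ≤ 1) ∧ (∀ x, ‖gradient η x‖ ≤ 2) ∧
      ∫ x, (‖gradient η x‖ ^ 2 - (1 / 2) * η x ^ 2) * Real.exp (-‖x‖ ^ 2 / 4) < 0) := by
  have h := eventually_cutoff n
  refine ⟨?_, h⟩
  obtain ⟨R, η, h1, h2, -, -, -, -, h3⟩ := h.exists
  exact ⟨η, h1, h2, h3⟩
end

section
/- Let n ≥ 1 be an integer, let q : ℝⁿ → ℝ be continuous, and suppose u : ℝⁿ → ℝ is a smooth positive function satisfying Δu(x) − (1/2)⟨x, ∇u(x)⟩ + q(x) u(x) = 0 for all x. Then for every smooth compactly supported φ : ℝⁿ → ℝ one has ∫_{ℝⁿ} q(x) φ(x)² exp(−‖x‖²/4) dx ≤ ∫_{ℝⁿ} ‖∇φ(x)‖² exp(−‖x‖²/4) dx. -/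
open MeasureTheory RealInnerProductSpace

/-- The Euclidean Laplacian: the sum of the pure second partial derivatives
(equivalently, the trace of the second derivative). -/
noncomputable def eucLaplacian {m : ℕ} (f : EuclideanSpace ℝ (Fin m) → ℝ)
    (x : EuclideanSpace ℝ (Fin m)) : ℝ :=
  ∑ i, iteratedFDeriv ℝ 2 f x ![EuclideanSpace.single i 1, EuclideanSpace.single i 1]


lemma aux_grad_coord {n : ℕ} (f : EuclideanSpace ℝ (Fin n) → ℝ) (x : EuclideanSpace ℝ (Fin n))
    (i : Fin n) : gradient f x i = fderiv ℝ f x (EuclideanSpace.single i 1) := by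
  have h : ⟪gradient f x, EuclideanSpace.single i (1:ℝ)⟫ = fderiv ℝ f x (EuclideanSpace.single i 1) := by
    simp [gradient]
  rw [← h, EuclideanSpace.inner_single_right]
  simp

lemma aux_int_zero {n : ℕ} (g : EuclideanSpace ℝ (Fin n) → ℝ) (hg : ContDiff ℝ 1 g)
    (hs : HasCompactSupport g) (v : EuclideanSpace ℝ (Fin n)) :
    Integrable (fun x => fderiv ℝ g x v) ∧ ∫ x, fderiv ℝ g x v = 0 := by
  have hi : Integrable (fun x => fderiv ℝ g x v) := by
    apply Continuous.integrable_of_hasCompactSupport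
    · exact (hg.continuous_fderiv (by norm_num)).clm_apply continuous_const
    · exact hs.fderiv_apply ℝ v
  refine ⟨hi, ?_⟩
  have := integral_mul_fderiv_eq_neg_fderiv_mul_of_integrable (μ := volume)
    (f := fun _ : EuclideanSpace ℝ (Fin n) => (1:ℝ)) (g := g) (v := v) (by simp) (by simpa using hi)
    (by simpa using hg.continuous.integrable_of_hasCompactSupport hs)
    (by fun_prop) (fun x _ => hg.differentiable (by norm_num) x)
  simpa using this

lemma aux_deriv {n : ℕ} (u φ : EuclideanSpace ℝ (Fin n) → ℝ)
    (hu : ContDiff ℝ (⊤ : ℕ∞) u) (hupos : ∀ x, 0 < u x) (hφ : ContDiff ℝ (⊤ : ℕ∞) φ)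
    (v x : EuclideanSpace ℝ (Fin n)) :
    fderiv ℝ (fun y => φ y ^ 2 * Real.exp (-‖y‖ ^ 2 / 4) * (fderiv ℝ u y v / u y)) x v
      = Real.exp (-‖x‖ ^ 2 / 4) * (2 * φ x * fderiv ℝ φ x v * (fderiv ℝ u x v / u x)
        - φ x ^ 2 * (1/2) * (⟪x, v⟫ * fderiv ℝ u x v) / u x
        + φ x ^ 2 * iteratedFDeriv ℝ 2 u x ![v, v] / u x
        - φ x ^ 2 * (fderiv ℝ u x v / u x) ^ 2) := by
  have hu0 := (hupos x).ne'
  have h1 : HasFDerivAt φ (fderiv ℝ φ x) x := (hφ.differentiable (by simp) x).hasFDerivAt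
  have h2 : HasFDerivAt u (fderiv ℝ u x) x := (hu.differentiable (by simp) x).hasFDerivAt
  have hd : ContDiff ℝ 1 (fderiv ℝ u) := hu.fderiv_right (by norm_cast)
  have h3 : HasFDerivAt (fderiv ℝ u) (fderiv ℝ (fderiv ℝ u) x) x :=
    (hd.differentiable (by norm_num) x).hasFDerivAt
  have h4 := h3.clm_apply (hasFDerivAt_const v x)
  have h5 : HasFDerivAt (fun y : EuclideanSpace ℝ (Fin n) => Real.exp (-‖y‖ ^ 2 / 4)) _ x :=
    (((hasStrictFDerivAt_norm_sq x).hasFDerivAt.const_mul (-1/4 : ℝ)).exp).congr_of_eventuallyEq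
      (Filter.Eventually.of_forall fun y => by
        show Real.exp _ = Real.exp _
        congr 1; ring)
  have h8 : HasFDerivAt (fun y => fderiv ℝ u y v / u y) _ x :=
    (h4.mul ((hasDerivAt_inv hu0).comp_hasFDerivAt x h2)).congr_of_eventuallyEq
      (Filter.Eventually.of_forall fun y => div_eq_mul_inv _ _)
  have h6 := ((h1.pow 2).mul h5).mul h8
  have h7 := h6.fderiv
  have e := congrArg (fun L => L v) h7
  refine Eq.trans e ?_
  rw [iteratedFDeriv_two_apply]
  simp
  have : Real.exp (-1/4 * ‖x‖^2) = Real.exp (-‖x‖ ^ 2 / 4) := by congr 1; ring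
  rw [this]
  field_simp
  ring

/-- Fischer-Colbrie–Schoen-type stability: if `u > 0` is smooth and solves the drift equation
`Δu − (1/2)⟨x, ∇u⟩ + q u = 0` with `q` continuous, then for every smooth compactly supported
`φ` one has `∫ q φ² e^{−‖x‖²/4} ≤ ∫ ‖∇φ‖² e^{−‖x‖²/4}`. -/
theorem stability_from_positive_solution (n : ℕ) (hn : 1 ≤ n)
    (q : EuclideanSpace ℝ (Fin n) → ℝ) (hq : Continuous q)
    (u : EuclideanSpace ℝ (Fin n) → ℝ) (hu : ContDiff ℝ (⊤ : ℕ∞) u) (hupos : ∀ x, 0 < u x)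
    (heq : ∀ x, eucLaplacian u x - (1 / 2) * ⟪x, gradient u x⟫ + q x * u x = 0)
    (φ : EuclideanSpace ℝ (Fin n) → ℝ) (hφ : ContDiff ℝ (⊤ : ℕ∞) φ) (hφsupp : HasCompactSupport φ) :
    ∫ x, q x * φ x ^ 2 * Real.exp (-‖x‖ ^ 2 / 4)
      ≤ ∫ x, ‖gradient φ x‖ ^ 2 * Real.exp (-‖x‖ ^ 2 / 4) := by
  let e : Fin n → EuclideanSpace ℝ (Fin n) := fun i => EuclideanSpace.single i 1
  let F : Fin n → EuclideanSpace ℝ (Fin n) → ℝ := fun i y =>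
    φ y ^ 2 * Real.exp (-‖y‖ ^ 2 / 4) * (fderiv ℝ u y (e i) / u y)
  have hφ1 : ContDiff ℝ 1 φ := hφ.of_le (by norm_cast)
  have hu1 : ContDiff ℝ 1 u := hu.of_le (by norm_cast)
  have hd : ContDiff ℝ 1 (fderiv ℝ u) := hu.fderiv_right (by norm_cast)
  have hG : ContDiff ℝ 1 (fun y : EuclideanSpace ℝ (Fin n) => Real.exp (-‖y‖ ^ 2 / 4)) :=
    (((contDiff_norm_sq ℝ).neg).div_const 4).exp
  have hF : ∀ i, ContDiff ℝ 1 (F i) := fun i =>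
    ((hφ1.pow 2).mul hG).mul ((hd.clm_apply contDiff_const).div hu1 fun x => (hupos x).ne')
  have hφ2 : HasCompactSupport (fun y => φ y ^ 2) :=
    hφsupp.comp_left (g := fun t : ℝ => t ^ 2) (by simp)
  have hFs : ∀ i, HasCompactSupport (F i) := fun i => (hφ2.mul_right).mul_right
  have hI := fun i => aux_int_zero (F i) (hF i) (hFs i) (e i)
  have hsum : ∫ x, ∑ i, fderiv ℝ (F i) x (e i) = 0 := by
    rw [integral_finsetSum _ fun i _ => (hI i).1]
    exact Finset.sum_eq_zero fun i _ => (hI i).2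
  have hsumI : Integrable (fun x => ∑ i, fderiv ℝ (F i) x (e i)) :=
    integrable_finsetSum _ fun i _ => (hI i).1
  have hqI : Integrable (fun x => q x * φ x ^ 2 * Real.exp (-‖x‖ ^ 2 / 4)) := by
    apply Continuous.integrable_of_hasCompactSupport
    · exact (hq.mul (hφ1.continuous.pow 2)).mul hG.continuous
    · exact (hφ2.mul_left).mul_right
  have hgn : ∀ x, ‖gradient φ x‖ = ‖fderiv ℝ φ x‖ := fun x => by simp [gradient]
  have hgI : Integrable (fun x => ‖gradient φ x‖ ^ 2 * Real.exp (-‖x‖ ^ 2 / 4)) := by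
    simp only [hgn]
    apply Continuous.integrable_of_hasCompactSupport
    · exact (((hφ1.continuous_fderiv (by norm_num)).norm).pow 2).mul hG.continuous
    · exact HasCompactSupport.mul_right
        ((hφsupp.fderiv ℝ).comp_left (g := fun t => ‖t‖ ^ 2) (by simp))
  have key : ∀ x, q x * φ x ^ 2 * Real.exp (-‖x‖ ^ 2 / 4) + ∑ i, fderiv ℝ (F i) x (e i)
      ≤ ‖gradient φ x‖ ^ 2 * Real.exp (-‖x‖ ^ 2 / 4) := by
    intro x
    have hu0 := (hupos x).ne'
    have hq' : q x = (1/2) * (∑ i, ⟪x, e i⟫ * fderiv ℝ u x (e i)) / u x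
        - (∑ i, iteratedFDeriv ℝ 2 u x ![e i, e i]) / u x := by
      have h := heq x
      have h2 : ⟪x, gradient u x⟫ = ∑ i, ⟪x, e i⟫ * fderiv ℝ u x (e i) := by
        rw [PiLp.inner_apply]
        refine Finset.sum_congr rfl fun i _ => ?_
        rw [aux_grad_coord]
        simp [e, EuclideanSpace.inner_single_right, mul_comm]
      rw [h2] at h
      unfold eucLaplacian at h
      change (∑ i, iteratedFDeriv ℝ 2 u x ![e i, e i]) - _ + _ = 0 at h
      field_simp
      linarith
    have hg2 : ‖gradient φ x‖ ^ 2 = ∑ i, (fderiv ℝ φ x (e i)) ^ 2 := by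
      rw [EuclideanSpace.norm_sq_eq]
      refine Finset.sum_congr rfl fun i _ => ?_
      rw [aux_grad_coord]; simp [e]
    have hdF : ∀ i, fderiv ℝ (F i) x (e i) = _ := fun i => aux_deriv u φ hu hupos hφ (e i) x
    simp only [hdF]
    rw [← Finset.mul_sum, hg2, mul_comm (∑ i, (fderiv ℝ φ x (e i)) ^ 2), mul_comm (q x * φ x ^ 2),
      ← mul_add]
    refine mul_le_mul_of_nonneg_left ?_ (Real.exp_pos _).le
    rw [hq', Finset.mul_sum, Finset.sum_div, Finset.sum_div, ← Finset.sum_sub_distrib,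
      Finset.sum_mul, ← Finset.sum_add_distrib]
    refine Finset.sum_le_sum fun i _ => ?_
    have := sq_nonneg (fderiv ℝ φ x (e i) - φ x * (fderiv ℝ u x (e i) / u x))
    rw [← sub_nonneg]
    refine this.trans (le_of_eq ?_)
    ring
  have := integral_mono (hqI.add hsumI) hgI key
  simp only [Pi.add_apply] at this
  rw [integral_add hqI hsumI, hsum, add_zero] at this
  exact this
end
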